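/- arXiv:math/9812046 — 2 statements merged into one kernel-verified Lean document; each statement's English description precedes it below -/
import Mathlib

section
/- For every odd squarefree positive integer q, every integer r ≥ 2 and every bounded set C ⊆ ℝ^{r−1}: R_r(C,q) = (s_q / 2^{r·ω(q)}) · Σ_{c ∣ q} (1/c) · Σ_𝒢 λ(𝒢) · Σ_{h ∈ s_q·C ∩ L(𝒢)} a(h,c)·Δ(h,c), where the middle sum runs over all tuples 𝒢 = (G^{(p)})_{p ∣ q/c} of set partitions of {1,…,r}, one for each prime p dividing q/c, and ω(q) is the number of prime factors of q. -/
/-!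
The identity holds integer point by integer point. By the Chinese remainder theorem
(`Ntup_eq_prod`) the count `N(h,q)` is the product of the local counts, and by definition of
`a(h,p)` one has `2^r N(h,p) = (a(h,p) + p) Δ(h,p)`. Expanding the product over `p ∣ q` yields a
sum over divisors `c ∣ q` of `a(h,c) Δ(h,c) · (q/c) Δ(h,q/c)` (`Ntup_expand`).

The factor `Δ(h,q/c)` is then resolved by Möbius inversion. If `P` is the partition of the indices
by equal partial sums mod `p`, then `|P| = r_eff(h)` and `h ∈ H_G` iff `G ⪯ P`; hence
`∑_{G : h ∈ H_G} λ(G) = 2^{r-|P|} = Δ(h,p)` (`sum_lamG_memH`), and the product over `p ∣ q/c` gives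
`∑_{𝒢 : h ∈ L(𝒢)} λ(𝒢) = Δ(h,q/c)` (`finsum_lamT`). Boundedness of `C` makes every sum over `h`
finite, so the sums may be interchanged.
-/

open scoped Pointwise Classical

/-- The number of squares modulo `q`. -/
noncomputable def Nsq (q : ℕ) : ℕ :=
  Nat.card {x : ZMod q // ∃ y : ZMod q, y ^ 2 = x}

/-- The mean spacing `s_q = q / N_q` between squares modulo `q`. -/
noncomputable def meanSp (q : ℕ) : ℝ := (q : ℝ) / (Nsq q : ℝ)

/-- `N(h,q)`: the number of `r`-tuples `(y_1, …, y_r)` of squares modulo `q`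
with `y_i - y_{i+1} ≡ h_i (mod q)` for `1 ≤ i ≤ r-1`. -/
noncomputable def Ntup (r q : ℕ) (h : Fin (r - 1) → ℤ) : ℕ :=
  Nat.card {y : Fin r → ZMod q //
    (∀ i, ∃ z : ZMod q, z ^ 2 = y i) ∧
    ∀ i : Fin (r - 1),
      y ⟨i.1, by have := i.2; omega⟩ - y ⟨i.1 + 1, by have := i.2; omega⟩ = (h i : ZMod q)}

/-- The `r`-level correlation `R_r(C,q) = (1/N_q) ∑_{h ∈ s_q C ∩ ℤ^{r-1}} N(h,q)`. -/
noncomputable def Rcorr (r q : ℕ) (C : Set (Fin (r - 1) → ℝ)) : ℝ :=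
  (1 / (Nsq q : ℝ)) * ∑ᶠ h : Fin (r - 1) → ℤ,
    if (fun i => (h i : ℝ)) ∈ meanSp q • C then (Ntup r q h : ℝ) else 0

/-- The partial sums `b_1(h) = 0`, `b_j(h) = h_1 + ⋯ + h_{j-1}` (0-indexed). -/
def bsum (r p : ℕ) (h : Fin (r - 1) → ZMod p) (j : Fin r) : ZMod p :=
  ∑ k ∈ Finset.univ.filter (fun k : Fin (r - 1) => (k : ℕ) < (j : ℕ)), h k

/-- `r_eff(h)`: the number of distinct values among `b_1(h), …, b_r(h)`. -/
def reff (r p : ℕ) (h : Fin (r - 1) → ZMod p) : ℕ :=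
  (Finset.image (bsum r p h) Finset.univ).card

/-- `N_r(h,p)` for `h ∈ (ℤ/pℤ)^{r-1}`. -/
noncomputable def NrP (r p : ℕ) (h : Fin (r - 1) → ZMod p) : ℕ :=
  Nat.card {y : Fin r → ZMod p //
    (∀ i, ∃ z : ZMod p, z ^ 2 = y i) ∧
    ∀ i : Fin (r - 1),
      y ⟨i.1, by have := i.2; omega⟩ - y ⟨i.1 + 1, by have := i.2; omega⟩ = h i}

/-- `a(h,c) = ∏_{p ∣ c} a(h mod p, p)` where `a(h,p) = 2^{r_eff(h)} N_r(h,p) - p`. -/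
noncomputable def aC (r c : ℕ) (h : Fin (r - 1) → ℤ) : ℤ :=
  ∏ p ∈ c.primeFactors,
    (2 ^ reff r p (fun i => (h i : ZMod p)) * (NrP r p (fun i => (h i : ZMod p)) : ℤ) - (p : ℤ))

/-- `Δ(h,c) = ∏_{p ∣ c} Δ(h mod p, p)` where `Δ(h,p) = 2^{r - r_eff(h)}`. -/
noncomputable def deltaC (r c : ℕ) (h : Fin (r - 1) → ℤ) : ℤ :=
  ∏ p ∈ c.primeFactors, (2 : ℤ) ^ (r - reff r p (fun i => (h i : ZMod p)))

/-- `λ(G) = ∑_{F ⪯ G} μ(F,G) 2^{r - |F|}`. -/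
noncomputable def lamG (r : ℕ) (mu : Setoid (Fin r) → Setoid (Fin r) → ℤ)
    (G : Setoid (Fin r)) : ℤ :=
  ∑ᶠ (F : Setoid (Fin r)) (_ : F ≤ G), mu F G * 2 ^ (r - Nat.card (Quotient F))

/-- `λ(𝒢) = ∏_{p ∣ d} λ(G^{(p)})` for a tuple `𝒢` of set partitions indexed by the primes
dividing `d`. -/
noncomputable def lamT (r d : ℕ) (mu : Setoid (Fin r) → Setoid (Fin r) → ℤ)
    (𝒢 : {p // p ∈ d.primeFactors} → Setoid (Fin r)) : ℤ :=
  ∏ p ∈ d.primeFactors.attach, lamG r mu (𝒢 p)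

/-- `h ∈ L(𝒢)`: for every prime `p ∣ d`, the reduction of `h` mod `p` lies in `H_{G^{(p)}}`. -/
def memL (r d : ℕ) (𝒢 : {p // p ∈ d.primeFactors} → Setoid (Fin r))
    (h : Fin (r - 1) → ℤ) : Prop :=
  ∀ p : {p // p ∈ d.primeFactors}, ∀ i j : Fin r, (𝒢 p) i j →
    bsum r p.1 (fun k => (h k : ZMod p.1)) i = bsum r p.1 (fun k => (h k : ZMod p.1)) j

/-! ### Multiplicativity of the tuple counts -/

/-- The number of `r`-tuples of squares in a commutative ring with prescribed consecutive
differences; it specialises to `Ntup` and `NrP` over `ZMod`. -/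
noncomputable def sqTuples (r : ℕ) (R : Type) [CommRing R] (h : Fin (r - 1) → R) : ℕ :=
  Nat.card {y : Fin r → R //
    (∀ i, ∃ z : R, z ^ 2 = y i) ∧
    ∀ i : Fin (r - 1),
      y ⟨i.1, by have := i.2; omega⟩ - y ⟨i.1 + 1, by have := i.2; omega⟩ = h i}

lemma sqTuples_congr (r : ℕ) {R S : Type} [CommRing R] [CommRing S] (e : R ≃+* S)
    (h : Fin (r - 1) → ℤ) :
    sqTuples r R (fun i => (h i : R)) = sqTuples r S (fun i => (h i : S)) := by
  refine Nat.card_congr ((Equiv.arrowCongr (Equiv.refl _) e.toEquiv).subtypeEquiv ?_)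
  intro y
  refine and_congr (forall_congr' fun i => ?_) (forall_congr' fun i => ?_)
  · constructor
    · rintro ⟨z, hz⟩
      exact ⟨e z, by simp [← map_pow, hz]⟩
    · rintro ⟨z, hz⟩
      refine ⟨e.symm z, ?_⟩
      rw [← map_pow, hz]
      simp
  · change _ ↔ e (y _) - e (y _) = _
    beta_reduce
    rw [← map_sub, ← map_intCast e, e.injective.eq_iff]
    rfl

lemma sqTuples_pi (r : ℕ) {ι : Type} [Fintype ι] (R : ι → Type) [∀ i, CommRing (R i)]
    (h : Fin (r - 1) → ℤ) :
    sqTuples r (∀ i, R i) (fun i => (h i : ∀ i, R i)) =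
      ∏ i, sqTuples r (R i) (fun k => (h k : R i)) := by
  unfold sqTuples
  rw [← Nat.card_pi]
  refine Nat.card_congr
    { toFun := fun y i => ⟨fun j => y.1 j i, fun j => ?_, fun k => ?_⟩
      invFun := fun y => ⟨fun j i => (y i).1 j, fun j => ?_, fun k => ?_⟩
      left_inv := fun y => rfl
      right_inv := fun y => rfl }
  · obtain ⟨z, hz⟩ := y.2.1 j
    exact ⟨z i, by simp [← hz]⟩
  · simpa using congrFun (y.2.2 k) i
  · choose z hz using fun i => (y i).2.1 j
    exact ⟨z, funext hz⟩
  · funext i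
    simpa using (y i).2.2 k

/-- Chinese remainder theorem for the counts `N(h,q)`. -/
lemma Ntup_eq_prod (r q : ℕ) (hsf : Squarefree q) (h : Fin (r - 1) → ℤ) :
    Ntup r q h = ∏ p ∈ q.primeFactors, NrP r p (fun i => (h i : ZMod p)) := by
  have hq : ∏ p : {p // p ∈ q.primeFactors}, (p : ℕ) = q := by
    rw [Finset.univ_eq_attach, Finset.prod_attach _ (fun p => p)]
    exact Nat.prod_primeFactors_of_squarefree hsf
  have hco : Pairwise (Function.onFun Nat.Coprime
      (fun p : {p // p ∈ q.primeFactors} => (p : ℕ))) := by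
    intro a b hab
    exact (Nat.coprime_primes (Nat.prime_of_mem_primeFactors a.2)
      (Nat.prime_of_mem_primeFactors b.2)).2 (fun e => hab (Subtype.ext e))
  have e := ZMod.prodEquivPi (fun p : {p // p ∈ q.primeFactors} => (p : ℕ)) hco
  rw [hq] at e
  have := (sqTuples_congr r e h).trans (sqTuples_pi r _ h)
  rw [← Finset.prod_attach]
  exact this

/-! ### Möbius inversion on the partition lattice -/

instance finite_setoid_fin (r : ℕ) : Finite (Setoid (Fin r)) :=
  Finite.of_injective (fun s : Setoid (Fin r) => (s.r : Fin r → Fin r → Prop))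
    (fun s t h => Setoid.ext fun a b => by
      have := congrFun (congrFun h a) b
      exact Iff.of_eq this)

/-- Möbius inversion on the partition lattice: summing `λ` over all `G ⪯ P` gives
`2^{r - |P|}`. -/
lemma sum_lamG (r : ℕ) [Fintype (Setoid (Fin r))]
    (mu : Setoid (Fin r) → Setoid (Fin r) → ℤ)
    (hmu : ∀ F G : Setoid (Fin r), F ≤ G →
      (∑ᶠ (c : Setoid (Fin r)) (_ : F ≤ c ∧ c ≤ G), mu F c) = if F = G then 1 else 0)
    (P : Setoid (Fin r)) :
    (∑ G : Setoid (Fin r), if G ≤ P then lamG r mu G else 0)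
      = 2 ^ (r - Nat.card (Quotient P)) := by
  have hmu' : ∀ F G : Setoid (Fin r), F ≤ G →
      (∑ c : Setoid (Fin r), if F ≤ c ∧ c ≤ G then mu F c else 0)
        = if F = G then 1 else 0 := by
    intro F G hFG
    rw [← hmu F G hFG, finsum_eq_sum_of_fintype]
    refine Finset.sum_congr rfl fun c _ => ?_
    rw [finsum_eq_if]
  have hlam : ∀ G, lamG r mu G =
      ∑ F : Setoid (Fin r), if F ≤ G then mu F G * 2 ^ (r - Nat.card (Quotient F)) else 0 := by
    intro G
    rw [lamG, finsum_eq_sum_of_fintype]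
    refine Finset.sum_congr rfl fun c _ => ?_
    rw [finsum_eq_if]
  calc (∑ G : Setoid (Fin r), if G ≤ P then lamG r mu G else 0)
      = ∑ G : Setoid (Fin r), ∑ F : Setoid (Fin r),
          if F ≤ G ∧ G ≤ P then mu F G * 2 ^ (r - Nat.card (Quotient F)) else 0 := by
        refine Finset.sum_congr rfl fun G _ => ?_
        rw [hlam]
        by_cases hG : G ≤ P <;> simp [hG]
    _ = ∑ F : Setoid (Fin r), (∑ G : Setoid (Fin r), if F ≤ G ∧ G ≤ P then mu F G else 0)
          * 2 ^ (r - Nat.card (Quotient F)) := by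
        rw [Finset.sum_comm]
        refine Finset.sum_congr rfl fun F _ => ?_
        rw [Finset.sum_mul]
        refine Finset.sum_congr rfl fun G _ => ?_
        rw [ite_mul, zero_mul]
    _ = ∑ F : Setoid (Fin r), if F = P then 2 ^ (r - Nat.card (Quotient F)) else 0 := by
        refine Finset.sum_congr rfl fun F _ => ?_
        by_cases hF : F ≤ P
        · rw [hmu' F P hF, ite_mul, one_mul, zero_mul]
        · have hne : F ≠ P := fun e => hF e.le
          rw [if_neg hne]
          have : ∀ G : Setoid (Fin r), ¬ (F ≤ G ∧ G ≤ P) := fun G h => hF (h.1.trans h.2)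
          simp [this]
    _ = 2 ^ (r - Nat.card (Quotient P)) := by simp

lemma card_quotient_ker_bsum (r p : ℕ) (h : Fin (r - 1) → ZMod p) :
    Nat.card (Quotient (Setoid.ker (bsum r p h))) = reff r p h := by
  rw [Nat.card_congr (Setoid.quotientKerEquivRange (bsum r p h)), Nat.card_coe_set_eq, reff,
    ← Set.ncard_coe_finset]
  congr 1
  ext x
  simp

/-- At one prime, `Δ(h,p)` is the sum of `λ(G)` over the partitions `G` with `h ∈ H_G`: these are
exactly the `G` refining the partition of the indices by equal partial sums. -/
lemma sum_lamG_memH (r p : ℕ) [Fintype (Setoid (Fin r))]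
    (mu : Setoid (Fin r) → Setoid (Fin r) → ℤ)
    (hmu : ∀ F G : Setoid (Fin r), F ≤ G →
      (∑ᶠ (c : Setoid (Fin r)) (_ : F ≤ c ∧ c ≤ G), mu F c) = if F = G then 1 else 0)
    (h : Fin (r - 1) → ZMod p) :
    (∑ G : Setoid (Fin r),
      if (∀ i j : Fin r, G i j → bsum r p h i = bsum r p h j) then lamG r mu G else 0)
      = 2 ^ (r - reff r p h) := by
  rw [← card_quotient_ker_bsum, ← sum_lamG r mu hmu]
  refine Finset.sum_congr rfl fun G _ => ?_
  have : (∀ i j : Fin r, G i j → bsum r p h i = bsum r p h j) ↔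
      G ≤ Setoid.ker (bsum r p h) := by
    constructor
    · intro H i j hij
      exact H i j hij
    · intro H i j hij
      exact H hij
  simp only [this]

/-- `Δ(h,d)` is the sum of `λ(𝒢)` over the tuples `𝒢` with `h ∈ L(𝒢)`. -/
lemma finsum_lamT (r d : ℕ) (mu : Setoid (Fin r) → Setoid (Fin r) → ℤ)
    (hmu : ∀ F G : Setoid (Fin r), F ≤ G →
      (∑ᶠ (c : Setoid (Fin r)) (_ : F ≤ c ∧ c ≤ G), mu F c) = if F = G then 1 else 0)
    (h : Fin (r - 1) → ℤ) [Fintype ({p // p ∈ d.primeFactors} → Setoid (Fin r))] :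
    (∑ 𝒢 : {p // p ∈ d.primeFactors} → Setoid (Fin r),
      if memL r d 𝒢 h then lamT r d mu 𝒢 else 0) = deltaC r d h := by
  have : Fintype (Setoid (Fin r)) := Fintype.ofFinite _
  rw [deltaC, ← Finset.prod_attach]
  simp only [← sum_lamG_memH r _ mu hmu]
  rw [← Finset.univ_eq_attach, Finset.prod_univ_sum, Fintype.piFinset_univ]
  refine Finset.sum_congr (by ext; simp) fun 𝒢 _ => ?_
  rw [Finset.prod_ite_zero, lamT, Finset.univ_eq_attach]
  simp [memL]

/-! ### Expansion over the divisors of `q` -/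

lemma primeFactors_div_of_squarefree {q c : ℕ} (hsf : Squarefree q) (hc : c ∣ q) :
    (q / c).primeFactors = q.primeFactors \ c.primeFactors := by
  obtain ⟨d, rfl⟩ := hc
  have hcd : Nat.Coprime c d := Nat.coprime_of_squarefree_mul hsf
  have hc0 : 0 < c := Nat.pos_of_ne_zero (left_ne_zero_of_mul hsf.ne_zero)
  rw [Nat.mul_div_cancel_left _ hc0, hcd.primeFactors_mul, Finset.union_sdiff_left,
    Finset.sdiff_eq_self_of_disjoint hcd.disjoint_primeFactors.symm]

/-- Expansion of a product of sums over the primes dividing a squarefree `q`, indexed by the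
divisors of `q`. -/
lemma prod_add_eq_sum_divisors {q : ℕ} (hsf : Squarefree q) (f g : ℕ → ℝ) :
    ∏ p ∈ q.primeFactors, (f p + g p) =
      ∑ c ∈ q.divisors, (∏ p ∈ c.primeFactors, f p) * ∏ p ∈ (q / c).primeFactors, g p := by
  rw [Finset.prod_add]
  symm
  refine Finset.sum_nbij' (fun c => c.primeFactors) (fun t => ∏ p ∈ t, p) ?_ ?_ ?_ ?_ ?_
  · intro c hc
    exact Finset.mem_powerset.2
      (Nat.primeFactors_mono (Nat.dvd_of_mem_divisors hc) hsf.ne_zero)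
  · intro t ht
    refine Nat.mem_divisors.2 ⟨?_, hsf.ne_zero⟩
    calc ∏ p ∈ t, p ∣ ∏ p ∈ q.primeFactors, p :=
          Finset.prod_dvd_prod_of_subset _ _ _ (Finset.mem_powerset.1 ht)
      _ = q := Nat.prod_primeFactors_of_squarefree hsf
  · intro c hc
    exact Nat.prod_primeFactors_of_squarefree
      (hsf.squarefree_of_dvd (Nat.dvd_of_mem_divisors hc))
  · intro t ht
    exact Nat.primeFactors_prod
      fun p hp => Nat.prime_of_mem_primeFactors (Finset.mem_powerset.1 ht hp)
  · intro c hc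
    rw [primeFactors_div_of_squarefree hsf (Nat.dvd_of_mem_divisors hc)]

lemma reff_le (r p : ℕ) (h : Fin (r - 1) → ZMod p) : reff r p h ≤ r :=
  Finset.card_image_le.trans (by simp)

/-- The pointwise identity behind the theorem: since `2^r N(h,p) = (a(h,p) + p) Δ(h,p)` at each
prime, multiplying over `p ∣ q` and expanding gives a sum over `c ∣ q`. -/
lemma Ntup_expand (r q : ℕ) (hsf : Squarefree q) (h : Fin (r - 1) → ℤ) :
    (Ntup r q h : ℝ) * 2 ^ (r * q.primeFactors.card) =
      ∑ c ∈ q.divisors, ((aC r c h * deltaC r c h : ℤ) : ℝ) *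
        (((q / c : ℕ) : ℝ) * (deltaC r (q / c) h : ℝ)) := by
  have key : ∀ p ∈ q.primeFactors,
      (NrP r p (fun i => (h i : ZMod p)) : ℝ) * 2 ^ r =
        (((2 ^ reff r p (fun i => (h i : ZMod p)) * (NrP r p (fun i => (h i : ZMod p)) : ℤ)
            - (p : ℤ)) * (2 : ℤ) ^ (r - reff r p (fun i => (h i : ZMod p))) : ℤ) : ℝ) +
          (p : ℝ) * (((2 : ℤ) ^ (r - reff r p (fun i => (h i : ZMod p))) : ℤ) : ℝ) := by
    intro p _
    have h2 : (2 : ℝ) ^ r = 2 ^ reff r p (fun i => (h i : ZMod p)) *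
        2 ^ (r - reff r p (fun i => (h i : ZMod p))) := by
      rw [← pow_add, Nat.add_sub_cancel' (reff_le _ _ _)]
    rw [h2]
    push_cast
    ring
  calc (Ntup r q h : ℝ) * 2 ^ (r * q.primeFactors.card)
      = ∏ p ∈ q.primeFactors, ((NrP r p (fun i => (h i : ZMod p)) : ℝ) * 2 ^ r) := by
        rw [Ntup_eq_prod r q hsf, Finset.prod_mul_distrib, Finset.prod_const, ← pow_mul]
        push_cast
        rfl
    _ = _ := by
        rw [Finset.prod_congr rfl key, prod_add_eq_sum_divisors hsf]
        refine Finset.sum_congr rfl fun c hc => ?_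
        have hsd : Squarefree (q / c) :=
          hsf.squarefree_of_dvd (Nat.div_dvd_of_dvd (Nat.dvd_of_mem_divisors hc))
        congr 1
        · rw [aC, deltaC, ← Finset.prod_mul_distrib]
          push_cast
          rfl
        · rw [Finset.prod_mul_distrib, deltaC, ← Nat.cast_prod,
            Nat.prod_primeFactors_of_squarefree hsd, Int.cast_prod]

/-! ### Integer points and the correlation formula -/

/-- A bounded set contains only finitely many integer points. -/
lemma finite_intPoints (n : ℕ) (D : Set (Fin n → ℝ)) (hD : Bornology.IsBounded D) :
    {h : Fin n → ℤ | (fun i => (h i : ℝ)) ∈ D}.Finite := by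
  obtain ⟨M, hM⟩ := hD.exists_norm_le
  refine (Set.finite_Icc (fun _ : Fin n => ⌈-M⌉) (fun _ => ⌊M⌋)).subset fun h hh => ?_
  have hb : ∀ i, |(h i : ℝ)| ≤ M := fun i => (norm_le_pi_norm _ i).trans (hM _ hh)
  exact ⟨fun i => Int.ceil_le.2 (abs_le.1 (hb i)).1, fun i => Int.le_floor.2 (abs_le.1 (hb i)).2⟩

/-- Kurlberg–Rudnick, Proposition 2 (`prop:Expression for R_r`): for odd squarefree `q`,
`R_r(C,q) = (s/2^{rω(q)}) ∑_{c ∣ q} (1/c) ∑_{supp 𝒢 ∣ q/c} λ(𝒢)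
∑_{h ∈ sC ∩ L(𝒢)} a(h,c) Δ(h,c)`, where `𝒢` runs over tuples of set partitions of
`{1,…,r}` indexed by the primes dividing `q/c`, and `mu` is the Möbius function of the
refinement order on set partitions, characterized by `∑_{F ≤ c ≤ G} μ(F,c) = δ_{F,G}`. -/
theorem statement8 (q : ℕ) (hodd : Odd q) (hsf : Squarefree q) (r : ℕ) (hr : 2 ≤ r)
    (C : Set (Fin (r - 1) → ℝ)) (hbd : Bornology.IsBounded C)
    (mu : Setoid (Fin r) → Setoid (Fin r) → ℤ)
    (hmu : ∀ F G : Setoid (Fin r), F ≤ G →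
      (∑ᶠ (c : Setoid (Fin r)) (_ : F ≤ c ∧ c ≤ G), mu F c) = if F = G then 1 else 0) :
    Rcorr r q C = (meanSp q / 2 ^ (r * q.primeFactors.card)) *
      ∑ c ∈ q.divisors, (1 / (c : ℝ)) *
        ∑ᶠ 𝒢 : {p // p ∈ (q / c).primeFactors} → Setoid (Fin r),
          (lamT r (q / c) mu 𝒢 : ℝ) *
            ∑ᶠ h : Fin (r - 1) → ℤ,
              if (fun i => (h i : ℝ)) ∈ meanSp q • C ∧ memL r (q / c) 𝒢 h
              then ((aC r c h * deltaC r c h : ℤ) : ℝ) else 0 := by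
  have hfin := finite_intPoints (r - 1) (meanSp q • C) (hbd.smul₀ (meanSp q))
  set S := hfin.toFinset with hS
  have hmem : ∀ h : Fin (r - 1) → ℤ, h ∈ S ↔ (fun i => (h i : ℝ)) ∈ meanSp q • C := by
    intro h
    simp [hS]
  have hL : (∑ᶠ h : Fin (r - 1) → ℤ,
      if (fun i => (h i : ℝ)) ∈ meanSp q • C then (Ntup r q h : ℝ) else 0) =
      ∑ h ∈ S, (Ntup r q h : ℝ) := by
    rw [finsum_eq_sum_of_support_subset (s := S)]
    · exact Finset.sum_congr rfl fun h hh => if_pos ((hmem h).1 hh)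
    · intro h hh
      by_contra hn
      exact hh (if_neg fun H => hn ((hmem h).2 H))
  have hR : ∀ c, c ∈ q.divisors →
      (∑ᶠ 𝒢 : {p // p ∈ (q / c).primeFactors} → Setoid (Fin r),
          (lamT r (q / c) mu 𝒢 : ℝ) *
            ∑ᶠ h : Fin (r - 1) → ℤ,
              if (fun i => (h i : ℝ)) ∈ meanSp q • C ∧ memL r (q / c) 𝒢 h
              then ((aC r c h * deltaC r c h : ℤ) : ℝ) else 0) =
        ∑ h ∈ S, ((aC r c h * deltaC r c h : ℤ) : ℝ) * (deltaC r (q / c) h : ℝ) := by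
    intro c _
    have : Fintype ({p // p ∈ (q / c).primeFactors} → Setoid (Fin r)) := Fintype.ofFinite _
    rw [finsum_eq_sum_of_fintype]
    have hin : ∀ 𝒢 : {p // p ∈ (q / c).primeFactors} → Setoid (Fin r),
        (∑ᶠ h : Fin (r - 1) → ℤ,
              if (fun i => (h i : ℝ)) ∈ meanSp q • C ∧ memL r (q / c) 𝒢 h
              then ((aC r c h * deltaC r c h : ℤ) : ℝ) else 0) =
        ∑ h ∈ S, if memL r (q / c) 𝒢 h then ((aC r c h * deltaC r c h : ℤ) : ℝ) else 0 := by
      intro 𝒢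
      rw [finsum_eq_sum_of_support_subset (s := S)]
      · refine Finset.sum_congr rfl fun h hh => ?_
        simp only [(hmem h).1 hh, true_and]
      · intro h hh
        by_contra hn
        exact hh (if_neg fun H => hn ((hmem h).2 H.1))
    simp only [hin, Finset.mul_sum]
    rw [Finset.sum_comm]
    refine Finset.sum_congr rfl fun h _ => ?_
    rw [← finsum_lamT r (q / c) mu hmu h, Int.cast_sum, Finset.mul_sum]
    refine Finset.sum_congr rfl fun 𝒢 _ => ?_
    by_cases H : memL r (q / c) 𝒢 h
    · rw [if_pos H, if_pos H, mul_comm]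
    · rw [if_neg H, if_neg H, Int.cast_zero, mul_zero, mul_zero]
  rw [Finset.sum_congr rfl fun c hc => by rw [hR c hc]]
  rw [Rcorr, hL, Finset.mul_sum]
  simp only [Finset.mul_sum]
  rw [Finset.sum_comm]
  refine Finset.sum_congr rfl fun h _ => ?_
  have hN : (Ntup r q h : ℝ) = (∑ c ∈ q.divisors, ((aC r c h * deltaC r c h : ℤ) : ℝ) *
        (((q / c : ℕ) : ℝ) * (deltaC r (q / c) h : ℝ))) / 2 ^ (r * q.primeFactors.card) := by
    rw [← Ntup_expand r q hsf h, mul_div_cancel_right₀ _ (by positivity)]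
  rw [hN, Finset.sum_div, Finset.mul_sum]
  refine Finset.sum_congr rfl fun c hc => ?_
  have hcd := Nat.dvd_of_mem_divisors hc
  have hc0 : (c : ℝ) ≠ 0 := Nat.cast_ne_zero.2 (ne_zero_of_dvd_ne_zero hsf.ne_zero hcd)
  rw [Nat.cast_div hcd hc0, meanSp]
  ring
end

section
/- Fix α > 0. For every ε > 0 there exists a constant C > 0 such that for every squarefree positive integer q, Σ_{d ∣ q, d > s} d^{−α} ≤ C · s^{−α+ε}. -/
/-!
The bound is Rankin's trick. Fix `0 < δ ≤ α` with `2 δ ≤ ε`. For `d > s` we have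
`d ^ (-α) ≤ s ^ (-α + δ) * d ^ (-δ)`, so the sum is at most
`s ^ (-α + δ) * ∏_{p ∣ q} (1 + p ^ (-δ))`. Moreover `s = ∏_{p ∣ q} 2 / (1 + 1 / p)` with every
factor at least `4 / 3`, and `1 + p ^ (-δ) ≤ (4 / 3) ^ δ` for all but finitely many `p`; hence
the product over `p` is `O(s ^ δ)`, and `s ^ (-α + 2 δ) ≤ s ^ (-α + ε)` because `1 ≤ s`.
-/

/-- `s = 2^{ω(q)} / σ_{-1}(q)` where `σ_{-1}(q) = ∏_{p ∣ q} (1 + 1/p)`. -/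
noncomputable def sMean (q : ℕ) : ℝ :=
  2 ^ q.primeFactors.card / ∏ p ∈ q.primeFactors, (1 + 1 / (p : ℝ))

theorem sMean_eq_prod (q : ℕ) :
    sMean q = ∏ p ∈ q.primeFactors, 2 / (1 + 1 / (p : ℝ)) := by
  rw [sMean, Finset.prod_div_distrib, Finset.prod_const]

theorem four_thirds_le_factor {p : ℕ} (hp : p.Prime) : (4 / 3 : ℝ) ≤ 2 / (1 + 1 / (p : ℝ)) := by
  have h2 : (2 : ℝ) ≤ p := by exact_mod_cast hp.two_le
  have h : 1 / (p : ℝ) ≤ 1 / 2 := one_div_le_one_div_of_le (by norm_num) h2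
  rw [le_div_iff₀ (by positivity)]
  linarith

theorem one_le_sMean (q : ℕ) : 1 ≤ sMean q := by
  rw [sMean_eq_prod]
  calc (1 : ℝ) = ∏ p ∈ q.primeFactors, 1 := by simp
    _ ≤ _ := Finset.prod_le_prod (fun _ _ => zero_le_one) fun p hp =>
      le_trans (by norm_num) (four_thirds_le_factor (Nat.prime_of_mem_primeFactors hp))

theorem sum_divisors_rpow (δ : ℝ) {q : ℕ} (hq : Squarefree q) :
    ∑ d ∈ q.divisors, (d : ℝ) ^ (-δ) = ∏ p ∈ q.primeFactors, (1 + (p : ℝ) ^ (-δ)) := by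
  -- The value at `0` must vanish for an `ArithmeticFunction`, whatever `0 ^ (-δ)` is.
  let f : ArithmeticFunction ℝ := ⟨fun n => if n = 0 then 0 else (n : ℝ) ^ (-δ), by simp⟩
  have hf : ∀ {n : ℕ}, n ≠ 0 → f n = (n : ℝ) ^ (-δ) := fun hn => if_neg hn
  have hmul : f.IsMultiplicative := by
    rw [ArithmeticFunction.IsMultiplicative.iff_ne_zero]
    refine ⟨by simp [hf], fun {m n} hm hn _ => ?_⟩
    rw [hf hm, hf hn, hf (mul_ne_zero hm hn), Nat.cast_mul,
      Real.mul_rpow (Nat.cast_nonneg _) (Nat.cast_nonneg _)]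
  have h := hmul.prodPrimeFactors_one_add_of_squarefree hq
  rw [Finset.sum_congr rfl fun d hd => (hf (Nat.pos_of_mem_divisors hd).ne').symm, ← h]
  exact Finset.prod_congr rfl fun p hp => by rw [hf (Nat.prime_of_mem_primeFactors hp).ne_zero]

/-- The Euler product over the primes dividing `q` is `O(s ^ δ)`, uniformly in `q`: only finitely
many primes violate `1 + p ^ (-δ) ≤ (4 / 3) ^ δ`. -/
theorem prod_one_add_rpow_le {δ : ℝ} (hδ : 0 < δ) :
    ∃ C > 0, ∀ q : ℕ, ∏ p ∈ q.primeFactors, (1 + (p : ℝ) ^ (-δ)) ≤ C * sMean q ^ δ := by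
  have hlim : Filter.Tendsto (fun n : ℕ => 1 + (n : ℝ) ^ (-δ)) Filter.atTop (nhds (1 + 0)) :=
    ((tendsto_rpow_neg_atTop hδ).comp tendsto_natCast_atTop_atTop).const_add 1
  have hlt : (1 + 0 : ℝ) < (4 / 3 : ℝ) ^ δ := by
    rw [add_zero]
    exact Real.one_lt_rpow (by norm_num) hδ
  obtain ⟨N, hN⟩ := Filter.eventually_atTop.mp (hlim.eventually_lt_const hlt)
  refine ⟨2 ^ N, by positivity, fun q => ?_⟩
  -- Primes `p < N` contribute at most a factor `2` each, the others at most `(4 / 3) ^ δ`.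
  have key : ∀ p ∈ q.primeFactors, 1 + (p : ℝ) ^ (-δ) ≤
      (if p < N then 2 else 1) * (2 / (1 + 1 / (p : ℝ))) ^ δ := by
    intro p hp
    have hp := Nat.prime_of_mem_primeFactors hp
    have h43 := four_thirds_le_factor hp
    have hpow : (4 / 3 : ℝ) ^ δ ≤ (2 / (1 + 1 / (p : ℝ))) ^ δ :=
      Real.rpow_le_rpow (by norm_num) h43 hδ.le
    split_ifs with h
    · have h1 : (p : ℝ) ^ (-δ) ≤ 1 :=
        Real.rpow_le_one_of_one_le_of_nonpos (by exact_mod_cast hp.one_lt.le) (by linarith)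
      linarith
    · have := hN p (not_lt.mp h)
      linarith
  calc ∏ p ∈ q.primeFactors, (1 + (p : ℝ) ^ (-δ))
      ≤ ∏ p ∈ q.primeFactors, (if p < N then 2 else 1) * (2 / (1 + 1 / (p : ℝ))) ^ δ :=
        Finset.prod_le_prod (fun p _ => by positivity) key
    _ = 2 ^ (q.primeFactors.filter (· < N)).card * sMean q ^ δ := by
        rw [Finset.prod_mul_distrib, Real.finsetProd_rpow _ _ (fun p _ => by positivity),
          sMean_eq_prod, ← Finset.prod_filter, Finset.prod_const]
    _ ≤ 2 ^ N * sMean q ^ δ := by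
        have h0 := one_le_sMean q
        have hcard : (q.primeFactors.filter (· < N)).card ≤ N := by
          calc _ ≤ (Finset.range N).card := Finset.card_le_card fun p hp => by
                simpa using (Finset.mem_filter.mp hp).2
            _ = N := Finset.card_range N
        gcongr
        norm_num

/-- Kurlberg–Rudnick, Lemma `bounding divisor sums` (Appendix C): for fixed `α > 0` and
every `ε > 0`, `∑_{d ∣ q, d > s} d^{-α} ≪ s^{-α+ε}` for squarefree `q`. -/
theorem statement14 (α : ℝ) (hα : 0 < α) (ε : ℝ) (hε : 0 < ε) :
    ∃ C > 0, ∀ q : ℕ, Squarefree q →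
      (∑ d ∈ q.divisors.filter (fun d : ℕ => sMean q < (d : ℝ)), (d : ℝ) ^ (-α)) ≤
        C * sMean q ^ (-α + ε) := by
  obtain ⟨δ, hδ, hδα, hδε⟩ : ∃ δ : ℝ, 0 < δ ∧ δ ≤ α ∧ 2 * δ ≤ ε :=
    ⟨min α (ε / 2), lt_min hα (by linarith), min_le_left _ _, by
      linarith [min_le_right α (ε / 2)]⟩
  obtain ⟨C, hC, hprod⟩ := prod_one_add_rpow_le hδ
  refine ⟨C, hC, fun q hq => ?_⟩
  have hs := one_le_sMean q
  have hs0 : 0 < sMean q := by linarith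
  calc ∑ d ∈ q.divisors.filter (fun d : ℕ => sMean q < (d : ℝ)), (d : ℝ) ^ (-α)
      ≤ ∑ d ∈ q.divisors.filter (fun d : ℕ => sMean q < (d : ℝ)),
          sMean q ^ (-α + δ) * (d : ℝ) ^ (-δ) := by
        refine Finset.sum_le_sum fun d hd => ?_
        have hd := (Finset.mem_filter.mp hd).2
        have hd0 : (0 : ℝ) < d := hs0.trans hd
        rw [show -α = (-α + δ) + -δ by ring, Real.rpow_add hd0, neg_add_cancel_right]
        exact mul_le_mul_of_nonneg_right
          (Real.rpow_le_rpow_of_nonpos hs0 hd.le (by linarith)) (by positivity)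
    _ ≤ ∑ d ∈ q.divisors, sMean q ^ (-α + δ) * (d : ℝ) ^ (-δ) :=
        Finset.sum_le_sum_of_subset_of_nonneg (Finset.filter_subset _ _)
          fun d _ _ => by positivity
    _ = sMean q ^ (-α + δ) * ∏ p ∈ q.primeFactors, (1 + (p : ℝ) ^ (-δ)) := by
        rw [← Finset.mul_sum, sum_divisors_rpow δ hq]
    _ ≤ sMean q ^ (-α + δ) * (C * sMean q ^ δ) :=
        mul_le_mul_of_nonneg_left (hprod q) (by positivity)
    _ = C * sMean q ^ (-α + 2 * δ) := by
        rw [show -α + 2 * δ = (-α + δ) + δ by ring, Real.rpow_add hs0 (-α + δ) δ]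
        ring
    _ ≤ C * sMean q ^ (-α + ε) :=
        mul_le_mul_of_nonneg_left
          (Real.rpow_le_rpow_of_exponent_le hs (by linarith)) hC.le
end
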